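/- Let K be an algebraically closed field of characteristic 0, let c ∈ K, let F : K³ → K³ be the polynomial map F(X,Y,Z) = (YZ, X² + cZ², XY), and set R = X² + cZ² and S = cX² + Z² in K[X,Y,Z]. Then: (i) for every k ≥ 0 there exist nonzero homogeneous polynomials h, h' ∈ K[X,Y,Z] with F^{2k}(X,Y,Z) = (h·RᵏX, h·SᵏY, h·RᵏZ) and F^{2k+1}(X,Y,Z) = (h'·SᵏYZ, h'·R^{k+1}, h'·SᵏXY); (ii) if c ∉ {1, −1}, then for all k the triples (RᵏX, SᵏY, RᵏZ) and (SᵏYZ, R^{k+1}, SᵏXY) have no nonconstant common divisor, so the induced rational self-map f of P² satisfies deg(fⁿ) = n + 1 for all n, while if c ∈ {1, −1} then f^{2k} is the map [X, cᵏY, Z]; (iii) letting G : K³ → K³ be the degree-3 polynomial map G(X,Y,Z) = (X³ + cXZ², cX²Y + YZ², X²Z + cZ³) (the reduced second iterate of F), the class [diag(1, t, 1)] lies in Aut(G) for every t ∈ K with t ≠ 0, so Aut(G) contains a subgroup isomorphic to Kˣ. -/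

import Mathlib

open Matrix MvPolynomial
open scoped Classical

noncomputable section

/-- `PGL₃(K)`: the quotient of `GL₃(K)` by its center (the nonzero scalar matrices). -/
abbrev PGL3 (K : Type*) [Field K] : Type _ :=
  GL (Fin 3) K ⧸ Subgroup.center (GL (Fin 3) K)

/-- The class in `PGL₃(K)` of a matrix (sent to `1` if the matrix is not invertible). -/
def toPGL3 {K : Type*} [Field K] (M : Matrix (Fin 3) (Fin 3) K) : PGL3 K :=
  if h : M.det ≠ 0 then
    QuotientGroup.mk (Matrix.GeneralLinearGroup.mkOfDetNeZero M h) else 1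

/-- The automorphism group (as a set of classes in `PGL₃(K)`) of a polynomial self-map
`F` of `K³`: the classes `[M]` such that `F(M·v) = c·M·F(v)` for some `c ≠ 0` and all `v`. -/
def AutQ {K : Type*} [Field K] (F : (Fin 3 → K) → (Fin 3 → K)) : Set (PGL3 K) :=
  {φ | ∃ M : GL (Fin 3) K, (QuotientGroup.mk M : PGL3 K) = φ ∧
    ∃ c : K, c ≠ 0 ∧ ∀ v : Fin 3 → K,
      F ((M : Matrix (Fin 3) (Fin 3) K) *ᵥ v) = c • ((M : Matrix (Fin 3) (Fin 3) K) *ᵥ F v)}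

/-- Two polynomial self-maps of `K³` are `PGL₃(K)`-conjugate. -/
def PGLConj {K : Type*} [Field K] (F F' : (Fin 3 → K) → (Fin 3 → K)) : Prop :=
  ∃ (M : Matrix (Fin 3) (Fin 3) K) (c : K), M.det ≠ 0 ∧ c ≠ 0 ∧
    ∀ v : Fin 3 → K, F (M *ᵥ v) = c • (M *ᵥ F' v)

/-- The `n`-fold composite of the polynomial self-map of `K³` whose coordinates are the
polynomials `P 0, P 1, P 2`, as a triple of polynomials (the `0`-th iterate is the identity). -/
def iterComp {K : Type*} [CommSemiring K] (P : Fin 3 → MvPolynomial (Fin 3) K) :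
    ℕ → Fin 3 → MvPolynomial (Fin 3) K
  | 0 => fun i => MvPolynomial.X i
  | n + 1 => fun i => MvPolynomial.aeval (iterComp P n) (P i)

/-!
Since `F` is homogeneous of degree `2`, common factors of the coordinates can be pulled out of `F`,
and up to a common factor `F` sends `(RᵏX, SᵏY, RᵏZ)` to `(SᵏYZ, Rᵏ⁺¹, SᵏXY)` and the latter to
`(Rᵏ⁺¹X, Sᵏ⁺¹Y, Rᵏ⁺¹Z)`.

If `c² ≠ 1`, then `R` is relatively prime to `S` and to `Y`. A common divisor of either triple
therefore divides both `X` and `Z`, so it is a unit. If `c² = 1`, then `S = cR` and the powers of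
`R` cancel from the even iterates.

The first and last coordinates of `G` do not involve `Y` and the middle one is linear in it, so `G`
commutes with `diag(1, t, 1)`; such a matrix is scalar only if `t = 1`.
-/

section HomogeneousMultiple

variable {ι σ τ A : Type*} [CommSemiring A]

theorem aeval_mul_of_isHomogeneous {B : Type*} [CommSemiring B] [Algebra A B]
    {p : MvPolynomial σ A} {d : ℕ} (hp : p.IsHomogeneous d) (b : B) (w : σ → B) :
    aeval (fun i => b * w i) p = b ^ d * aeval w p := by
  simp only [aeval_def, eval₂_eq, Finset.mul_sum]
  refine Finset.sum_congr rfl fun m hm => ?_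
  have hdeg : ∑ i ∈ m.support, m i = d := (hp.degree_eq_sum_deg_support hm).symm
  simp only [mul_pow, Finset.prod_mul_distrib, Finset.prod_pow_eq_pow_sum, hdeg, mul_left_comm]

/-- `V` is obtained from `W` by multiplying all coordinates by one nonzero homogeneous polynomial;
the two families then define the same rational map to projective space. -/
def IsHomogeneousMultiple (V W : ι → MvPolynomial σ A) : Prop :=
  ∃ h : MvPolynomial σ A, h ≠ 0 ∧ (∃ d, h.IsHomogeneous d) ∧ ∀ j, V j = h * W j

namespace IsHomogeneousMultiple

theorem refl [Nontrivial A] (V : ι → MvPolynomial σ A) : IsHomogeneousMultiple V V :=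
  ⟨1, one_ne_zero, ⟨0, isHomogeneous_one σ A⟩, fun j => (one_mul (V j)).symm⟩

variable [NoZeroDivisors A]

theorem trans {U V W : ι → MvPolynomial σ A} (hUV : IsHomogeneousMultiple U V)
    (hVW : IsHomogeneousMultiple V W) : IsHomogeneousMultiple U W := by
  obtain ⟨g, hg, ⟨d, hgd⟩, hU⟩ := hUV
  obtain ⟨h, hh, ⟨e, hhe⟩, hV⟩ := hVW
  exact ⟨g * h, mul_ne_zero hg hh, ⟨d + e, hgd.mul hhe⟩, fun j => by rw [hU, hV, mul_assoc]⟩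

protected theorem aeval {P : ι → MvPolynomial τ A} {d : ℕ} (hP : ∀ i, (P i).IsHomogeneous d)
    {V W : τ → MvPolynomial σ A} (hVW : IsHomogeneousMultiple V W) :
    IsHomogeneousMultiple (fun i => aeval V (P i)) (fun i => aeval W (P i)) := by
  obtain ⟨h, hh, ⟨e, hhe⟩, hV⟩ := hVW
  refine ⟨h ^ d, pow_ne_zero d hh, ⟨e * d, hhe.pow d⟩, fun i => ?_⟩
  rw [funext hV]
  exact aeval_mul_of_isHomogeneous (hP i) h W

theorem iterComp_succ {P W W' : Fin 3 → MvPolynomial (Fin 3) A} {d n : ℕ}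
    (hP : ∀ i, (P i).IsHomogeneous d) (hW : IsHomogeneousMultiple (iterComp P n) W)
    (hW' : IsHomogeneousMultiple (fun i => aeval W (P i)) W') :
    IsHomogeneousMultiple (iterComp P (n + 1)) W' :=
  (hW.aeval hP).trans hW'

end IsHomogeneousMultiple

end HomogeneousMultiple

section Iterates

variable {A : Type*} [CommSemiring A] (c : A)

/-- The quadratic form `R = X² + cZ²`, the recurring factor of the outer coordinates of the even
iterates of `F`. The variables `X`, `Y`, `Z` are `X 0`, `X 1`, `X 2` throughout. -/
def formR : MvPolynomial (Fin 3) A := X 0 ^ 2 + C c * X 2 ^ 2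

/-- The quadratic form `S = cX² + Z²`, the recurring factor of the middle coordinate of the even
iterates of `F`. -/
def formS : MvPolynomial (Fin 3) A := C c * X 0 ^ 2 + X 2 ^ 2

/-- The map `F = (YZ, X² + cZ², XY)` whose iterates are studied, as a triple of quadratic forms. -/
def quadMap : Fin 3 → MvPolynomial (Fin 3) A :=
  ![X 1 * X 2, X 0 ^ 2 + C c * X 2 ^ 2, X 0 * X 1]

/-- The triple `(RᵏX, SᵏY, RᵏZ)`, proportional to the iterate `F²ᵏ`. -/
def evenIterate (k : ℕ) : Fin 3 → MvPolynomial (Fin 3) A :=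
  ![formR c ^ k * X 0, formS c ^ k * X 1, formR c ^ k * X 2]

/-- The triple `(SᵏYZ, Rᵏ⁺¹, SᵏXY)`, proportional to the iterate `F²ᵏ⁺¹`. -/
def oddIterate (k : ℕ) : Fin 3 → MvPolynomial (Fin 3) A :=
  ![formS c ^ k * (X 1 * X 2), formR c ^ (k + 1), formS c ^ k * (X 0 * X 1)]

theorem formR_ne_zero [Nontrivial A] : formR c ≠ 0 := fun h => by
  simpa [formR] using congrArg (eval ![1, 0, 0]) h

theorem formS_ne_zero [Nontrivial A] : formS c ≠ 0 := fun h => by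
  simpa [formS] using congrArg (eval ![0, 0, 1]) h

theorem isHomogeneous_formR : (formR c).IsHomogeneous 2 :=
  (isHomogeneous_X_pow 0 2).add (isHomogeneous_C_mul_X_pow c 2 2)

theorem isHomogeneous_formS : (formS c).IsHomogeneous 2 :=
  (isHomogeneous_C_mul_X_pow c 0 2).add (isHomogeneous_X_pow 2 2)

theorem isHomogeneous_X_mul_X {σ : Type*} (i j : σ) :
    (X i * X j : MvPolynomial σ A).IsHomogeneous 2 :=
  (isHomogeneous_X A i).mul (isHomogeneous_X A j)

theorem isHomogeneous_quadMap (i : Fin 3) : (quadMap c i).IsHomogeneous 2 := by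
  fin_cases i
  exacts [isHomogeneous_X_mul_X 1 2, isHomogeneous_formR c, isHomogeneous_X_mul_X 0 1]

theorem isHomogeneous_evenIterate (k : ℕ) (i : Fin 3) :
    (evenIterate c k i).IsHomogeneous (2 * k + 1) := by
  fin_cases i
  exacts [((isHomogeneous_formR c).pow k).mul (isHomogeneous_X A 0),
    ((isHomogeneous_formS c).pow k).mul (isHomogeneous_X A 1),
    ((isHomogeneous_formR c).pow k).mul (isHomogeneous_X A 2)]

theorem isHomogeneous_oddIterate (k : ℕ) (i : Fin 3) :
    (oddIterate c k i).IsHomogeneous (2 * k + 2) := by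
  fin_cases i
  exacts [((isHomogeneous_formS c).pow k).mul (isHomogeneous_X_mul_X 1 2),
    (isHomogeneous_formR c).pow (k + 1),
    ((isHomogeneous_formS c).pow k).mul (isHomogeneous_X_mul_X 0 1)]

theorem aeval_evenIterate_quadMap (k : ℕ) (i : Fin 3) :
    aeval (evenIterate c k) (quadMap c i) = formR c ^ k * oddIterate c k i := by
  fin_cases i <;>
    simp only [quadMap, evenIterate, oddIterate, formR, map_mul, map_add, map_pow, aeval_X, aeval_C,
      algebraMap_eq, Fin.zero_eta, Fin.mk_one, Fin.reduceFinMk, cons_val] <;>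
    ring

theorem aeval_oddIterate_quadMap (k : ℕ) (i : Fin 3) :
    aeval (oddIterate c k) (quadMap c i) = formS c ^ k * X 1 * evenIterate c (k + 1) i := by
  fin_cases i <;>
    simp only [quadMap, evenIterate, oddIterate, formS, map_mul, map_add, map_pow, aeval_X, aeval_C,
      algebraMap_eq, Fin.zero_eta, Fin.mk_one, Fin.reduceFinMk, cons_val] <;>
    ring

variable [NoZeroDivisors A] [Nontrivial A]

theorem isHomogeneousMultiple_aeval_evenIterate (k : ℕ) :
    IsHomogeneousMultiple (fun i => aeval (evenIterate c k) (quadMap c i)) (oddIterate c k) :=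
  ⟨formR c ^ k, pow_ne_zero k (formR_ne_zero c), ⟨_, (isHomogeneous_formR c).pow k⟩,
    aeval_evenIterate_quadMap c k⟩

theorem isHomogeneousMultiple_aeval_oddIterate (k : ℕ) :
    IsHomogeneousMultiple (fun i => aeval (oddIterate c k) (quadMap c i))
      (evenIterate c (k + 1)) :=
  ⟨formS c ^ k * X 1, mul_ne_zero (pow_ne_zero k (formS_ne_zero c)) (X_ne_zero 1),
    ⟨_, ((isHomogeneous_formS c).pow k).mul (isHomogeneous_X A 1)⟩,
    aeval_oddIterate_quadMap c k⟩

theorem isHomogeneousMultiple_iterComp_even (k : ℕ) :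
    IsHomogeneousMultiple (iterComp (quadMap c) (2 * k)) (evenIterate c k) := by
  induction k with
  | zero =>
    have h0 : evenIterate c 0 = iterComp (quadMap c) 0 := by
      ext1 i
      fin_cases i <;> simp [evenIterate, iterComp]
    exact h0 ▸ IsHomogeneousMultiple.refl _
  | succ k ih =>
    have hodd := ih.iterComp_succ (isHomogeneous_quadMap c)
      (isHomogeneousMultiple_aeval_evenIterate c k)
    exact hodd.iterComp_succ (isHomogeneous_quadMap c)
      (isHomogeneousMultiple_aeval_oddIterate c k)

theorem isHomogeneousMultiple_iterComp_odd (k : ℕ) :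
    IsHomogeneousMultiple (iterComp (quadMap c) (2 * k + 1)) (oddIterate c k) :=
  (isHomogeneousMultiple_iterComp_even c k).iterComp_succ (isHomogeneous_quadMap c)
    (isHomogeneousMultiple_aeval_evenIterate c k)

end Iterates

section DegenerateCase

variable {A : Type*} [CommRing A] {c : A}

theorem formS_eq_C_mul_formR (hc : c ^ 2 = 1) : formS c = C c * formR c := by
  have hC : (C c : MvPolynomial (Fin 3) A) ^ 2 = 1 := by rw [← C_pow, hc, C_1]
  rw [formS, formR]
  linear_combination -X 2 ^ 2 * hC

theorem isHomogeneousMultiple_iterComp_even_of_sq_eq_one [IsDomain A] (hc : c ^ 2 = 1) (k : ℕ) :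
    IsHomogeneousMultiple (iterComp (quadMap c) (2 * k)) ![X 0, C (c ^ k) * X 1, X 2] := by
  refine (isHomogeneousMultiple_iterComp_even c k).trans
    ⟨formR c ^ k, pow_ne_zero k (formR_ne_zero c), ⟨_, (isHomogeneous_formR c).pow k⟩, fun j => ?_⟩
  fin_cases j
  · rfl
  · change formS c ^ k * X 1 = formR c ^ k * (C (c ^ k) * X 1)
    rw [formS_eq_C_mul_formR hc, mul_pow, C_pow]
    ring
  · rfl

end DegenerateCase

section Coprimality

variable {A : Type*} [CommRing A] [IsDomain A]

theorem isRelPrime_X_X {σ : Type*} {i j : σ} (hij : i ≠ j) :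
    IsRelPrime (X i : MvPolynomial σ A) (X j) :=
  X_prime.irreducible.isRelPrime_iff_not_dvd.2 fun h => hij (X_dvd_X.1 h)

theorem isRelPrime_formR_X (c : A) : IsRelPrime (formR c) (X 1) := by
  refine (X_prime.irreducible.isRelPrime_iff_not_dvd.2 ?_).symm
  rintro ⟨r, hr⟩
  simpa [formR] using congrArg (eval ![1, 0, 0]) hr

variable [UniqueFactorizationMonoid A] {c : A}

theorem isRelPrime_formR_formS (hc : IsUnit (1 - c ^ 2)) :
    IsRelPrime (formR c) (formS c) := by
  intro q hR hS
  have hu : IsUnit (C (1 - c ^ 2) : MvPolynomial (Fin 3) A) := hc.map C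
  have hX : q ∣ C (1 - c ^ 2) * X 0 ^ 2 := by
    have h : C (1 - c ^ 2) * X 0 ^ 2 = formR c - C c * formS c := by
      simp only [formR, formS, map_sub, map_one, map_pow]
      ring
    exact h ▸ dvd_sub hR (hS.mul_left (C c))
  have hZ : q ∣ C (1 - c ^ 2) * X 2 ^ 2 := by
    have h : C (1 - c ^ 2) * X 2 ^ 2 = formS c - C c * formR c := by
      simp only [formR, formS, map_sub, map_one, map_pow]
      ring
    exact h ▸ dvd_sub hS (hR.mul_left (C c))
  exact (isRelPrime_X_X (by decide)).pow (hu.dvd_mul_left.1 hX) (hu.dvd_mul_left.1 hZ)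

theorem isUnit_of_dvd_evenIterate (hc : IsUnit (1 - c ^ 2)) (k : ℕ)
    {q : MvPolynomial (Fin 3) A} (hq : ∀ j, q ∣ evenIterate c k j) : IsUnit q := by
  have hRSY : IsRelPrime (formR c ^ k) (formS c ^ k * X 1) :=
    (isRelPrime_formR_formS hc).pow.mul_right (isRelPrime_formR_X c).pow_left
  have hqR : IsRelPrime q (formR c ^ k) := hRSY.symm.of_dvd_left (hq 1)
  exact isRelPrime_X_X (show (0 : Fin 3) ≠ 2 by decide)
    (hqR.dvd_of_dvd_mul_left (hq 0)) (hqR.dvd_of_dvd_mul_left (hq 2))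

theorem isUnit_of_dvd_oddIterate (hc : IsUnit (1 - c ^ 2)) (k : ℕ)
    {q : MvPolynomial (Fin 3) A} (hq : ∀ j, q ∣ oddIterate c k j) : IsUnit q := by
  have hqS : IsRelPrime q (formS c ^ k) :=
    (isRelPrime_formR_formS hc).pow.of_dvd_left (hq 1)
  have hqY : IsRelPrime q (X 1) := (isRelPrime_formR_X c).pow_left.of_dvd_left (hq 1)
  have hYZ : q ∣ X 1 * X 2 := hqS.dvd_of_dvd_mul_left (hq 0)
  have hXY : q ∣ X 0 * X 1 := hqS.dvd_of_dvd_mul_left (hq 2)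
  exact isRelPrime_X_X (show (0 : Fin 3) ≠ 2 by decide)
    (hqY.dvd_of_dvd_mul_right hXY) (hqY.dvd_of_dvd_mul_left hYZ)

theorem exists_primitive_iterComp_quadMap (hc : IsUnit (1 - c ^ 2)) (n : ℕ) :
    ∃ (h : MvPolynomial (Fin 3) A) (W : Fin 3 → MvPolynomial (Fin 3) A),
      (∀ j, iterComp (quadMap c) n j = h * W j) ∧
      (∀ q : MvPolynomial (Fin 3) A, (∀ j, q ∣ W j) → IsUnit q) ∧
      ∀ j, (W j).IsHomogeneous (n + 1) := by
  rcases n.even_or_odd' with ⟨k, rfl | rfl⟩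
  · obtain ⟨h, -, -, hW⟩ := isHomogeneousMultiple_iterComp_even c k
    exact ⟨h, evenIterate c k, hW, fun q => isUnit_of_dvd_evenIterate hc k,
      isHomogeneous_evenIterate c k⟩
  · obtain ⟨h, -, -, hW⟩ := isHomogeneousMultiple_iterComp_odd c k
    exact ⟨h, oddIterate c k, hW, fun q => isUnit_of_dvd_oddIterate hc k,
      isHomogeneous_oddIterate c k⟩

end Coprimality

section CoordinateScaling

variable {n A : Type*} [Fintype n] [DecidableEq n]

/-- The one-parameter subgroup of `GL n A` that scales the `i`-th coordinate and fixes the others;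
for `i` the middle index of `Fin 3` it is `t ↦ diag(1, t, 1)`. -/
def coordScaling [Semiring A] (i : n) : Aˣ →* GL n A :=
  Units.map
    ((diagonalRingHom n A : (n → A) →* Matrix n n A).comp (MonoidHom.mulSingle (fun _ => A) i))

theorem coe_coordScaling [Semiring A] (i : n) (t : Aˣ) :
    (coordScaling i t : Matrix n n A) = diagonal (Pi.mulSingle i (t : A)) := rfl

variable [CommRing A]

theorem eq_one_of_coordScaling_mem_center [Nontrivial n] {i : n} {t : Aˣ}
    (ht : coordScaling i t ∈ Subgroup.center (GL n A)) : t = 1 := by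
  obtain ⟨r, hr⟩ := GeneralLinearGroup.mem_center_iff_val_mem_range_scalar.1 ht
  rw [coe_coordScaling, scalar_apply] at hr
  obtain ⟨j, hj⟩ := exists_ne i
  have hri : r = t := by simpa using congrFun₂ hr i i
  have hrj : r = 1 := by simpa [hj] using congrFun₂ hr j j
  exact Units.ext (hri.symm.trans hrj)

theorem injective_mk_comp_coordScaling [Nontrivial n] (i : n) :
    Function.Injective
      ((QuotientGroup.mk' (Subgroup.center (GL n A))).comp (coordScaling i)) :=
  (injective_iff_map_eq_one _).2 fun _ ht =>
    eq_one_of_coordScaling_mem_center ((QuotientGroup.eq_one_iff _).1 ht)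

end CoordinateScaling

section Automorphisms

theorem toPGL3_coe {K : Type*} [Field K] (M : GL (Fin 3) K) :
    toPGL3 (M : Matrix (Fin 3) (Fin 3) K) = QuotientGroup.mk M := by
  have hM : (M : Matrix (Fin 3) (Fin 3) K).det ≠ 0 := M.det_ne_zero
  rw [toPGL3, dif_pos hM]
  exact congrArg _ (Units.ext rfl)

variable {A : Type*} [CommSemiring A]

theorem coe_coordScaling_one (t : Aˣ) :
    (coordScaling (1 : Fin 3) t : Matrix (Fin 3) (Fin 3) A) = diagonal ![1, (t : A), 1] := by
  rw [coe_coordScaling]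
  congr 1
  ext i
  fin_cases i <;> simp

/-- The cubic map `G` on `A³`, the reduced second iterate of `F`, whose automorphisms are studied;
unlike `F` it is a function on points, since this is what `AutQ` takes. -/
def reducedSecondIterate (c : A) (v : Fin 3 → A) : Fin 3 → A :=
  ![v 0 ^ 3 + c * (v 0 * v 2 ^ 2), c * (v 0 ^ 2 * v 1) + v 1 * v 2 ^ 2,
    v 0 ^ 2 * v 2 + c * v 2 ^ 3]

theorem reducedSecondIterate_diagonal_mulVec (c t : A) (v : Fin 3 → A) :
    reducedSecondIterate c (diagonal ![1, t, 1] *ᵥ v) =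
      diagonal ![1, t, 1] *ᵥ reducedSecondIterate c v := by
  ext i
  fin_cases i <;>
    simp only [reducedSecondIterate, mulVec_diagonal, Fin.zero_eta, Fin.mk_one, Fin.reduceFinMk,
      cons_val] <;>
    ring

theorem mk_coordScaling_mem_AutQ {K : Type*} [Field K] (c : K) (t : Kˣ) :
    (QuotientGroup.mk (coordScaling 1 t) : PGL3 K) ∈ AutQ (reducedSecondIterate c) :=
  ⟨coordScaling 1 t, rfl, 1, one_ne_zero, fun v => by
    rw [coe_coordScaling_one, one_smul, reducedSecondIterate_diagonal_mulVec]⟩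

theorem toPGL3_diagonal_mem_AutQ {K : Type*} [Field K] (c : K) {t : K} (ht : t ≠ 0) :
    toPGL3 (diagonal ![1, t, 1]) ∈ AutQ (reducedSecondIterate c) := by
  have h := mk_coordScaling_mem_AutQ c (Units.mk0 t ht)
  rwa [← toPGL3_coe, coe_coordScaling_one] at h

theorem exists_subgroup_AutQ_mulEquiv_units {K : Type*} [Field K] (c : K) :
    ∃ H : Subgroup (PGL3 K),
      (H : Set (PGL3 K)) ⊆ AutQ (reducedSecondIterate c) ∧ Nonempty (H ≃* Kˣ) := by
  refine ⟨((QuotientGroup.mk' _).comp (coordScaling 1)).range, ?_,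
    ⟨(MonoidHom.ofInjective (injective_mk_comp_coordScaling 1)).symm⟩⟩
  rintro _ ⟨t, rfl⟩
  exact mk_coordScaling_mem_AutQ c t

end Automorphisms

theorem stmt16_general {K : Type*} [Field K] (c : K) :
    let P : Fin 3 → MvPolynomial (Fin 3) K :=
      ![X 1 * X 2, X 0 ^ 2 + C c * X 2 ^ 2, X 0 * X 1]
    let R : MvPolynomial (Fin 3) K := X 0 ^ 2 + C c * X 2 ^ 2
    let S : MvPolynomial (Fin 3) K := C c * X 0 ^ 2 + X 2 ^ 2
    let G : (Fin 3 → K) → (Fin 3 → K) := fun v =>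
      ![v 0 ^ 3 + c * (v 0 * v 2 ^ 2), c * (v 0 ^ 2 * v 1) + v 1 * v 2 ^ 2,
        v 0 ^ 2 * v 2 + c * v 2 ^ 3]
    (∀ k : ℕ,
      (∃ h : MvPolynomial (Fin 3) K, h ≠ 0 ∧ (∃ dd, h.IsHomogeneous dd) ∧
        iterComp P (2 * k) 0 = h * (R ^ k * X 0) ∧
        iterComp P (2 * k) 1 = h * (S ^ k * X 1) ∧
        iterComp P (2 * k) 2 = h * (R ^ k * X 2)) ∧
      (∃ h' : MvPolynomial (Fin 3) K, h' ≠ 0 ∧ (∃ dd, h'.IsHomogeneous dd) ∧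
        iterComp P (2 * k + 1) 0 = h' * (S ^ k * (X 1 * X 2)) ∧
        iterComp P (2 * k + 1) 1 = h' * R ^ (k + 1) ∧
        iterComp P (2 * k + 1) 2 = h' * (S ^ k * (X 0 * X 1)))) ∧
    (c ≠ 1 → c ≠ -1 →
      (∀ k : ℕ,
        (∀ q : MvPolynomial (Fin 3) K,
          q ∣ R ^ k * X 0 → q ∣ S ^ k * X 1 → q ∣ R ^ k * X 2 → IsUnit q) ∧
        (∀ q : MvPolynomial (Fin 3) K,
          q ∣ S ^ k * (X 1 * X 2) → q ∣ R ^ (k + 1) → q ∣ S ^ k * (X 0 * X 1) →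
          IsUnit q)) ∧
      (∀ n : ℕ, ∃ (h : MvPolynomial (Fin 3) K) (W : Fin 3 → MvPolynomial (Fin 3) K),
        (∀ j, iterComp P n j = h * W j) ∧
        (∀ q : MvPolynomial (Fin 3) K, (∀ j, q ∣ W j) → IsUnit q) ∧
        ∀ j, (W j).IsHomogeneous (n + 1))) ∧
    ((c = 1 ∨ c = -1) →
      ∀ k : ℕ, ∃ h : MvPolynomial (Fin 3) K, h ≠ 0 ∧
        iterComp P (2 * k) 0 = h * X 0 ∧
        iterComp P (2 * k) 1 = C (c ^ k) * (h * X 1) ∧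
        iterComp P (2 * k) 2 = h * X 2) ∧
    ((∀ t : K, t ≠ 0 → toPGL3 (Matrix.diagonal ![1, t, 1]) ∈ AutQ G) ∧
      ∃ H : Subgroup (PGL3 K), (H : Set (PGL3 K)) ⊆ AutQ G ∧ Nonempty (H ≃* Kˣ)) := by
  intro P R S G
  refine ⟨fun k => ⟨?_, ?_⟩, fun hc₁ hc₂ => ?_, fun hc k => ?_,
    fun t ht => toPGL3_diagonal_mem_AutQ c ht, exists_subgroup_AutQ_mulEquiv_units c⟩
  · obtain ⟨h, h₀, hd, e⟩ := isHomogeneousMultiple_iterComp_even c k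
    exact ⟨h, h₀, hd, e 0, e 1, e 2⟩
  · obtain ⟨h, h₀, hd, e⟩ := isHomogeneousMultiple_iterComp_odd c k
    exact ⟨h, h₀, hd, e 0, e 1, e 2⟩
  · have hc : IsUnit (1 - c ^ 2) :=
      (sub_ne_zero.2 (sq_ne_one_iff.2 ⟨hc₁, hc₂⟩).symm).isUnit
    exact ⟨fun k =>
      ⟨fun q h₀ h₁ h₂ =>
          isUnit_of_dvd_evenIterate hc k fun | 0 => h₀ | 1 => h₁ | 2 => h₂,
        fun q h₀ h₁ h₂ =>
          isUnit_of_dvd_oddIterate hc k fun | 0 => h₀ | 1 => h₁ | 2 => h₂⟩,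
      exists_primitive_iterComp_quadMap hc⟩
  · obtain ⟨h, h₀, -, e⟩ :=
      isHomogeneousMultiple_iterComp_even_of_sq_eq_one (sq_eq_one_iff.2 hc) k
    exact ⟨h, h₀, e 0, (e 1).trans (mul_left_comm _ _ _), e 2⟩

theorem stmt16 {K : Type*} [Field K] [IsAlgClosed K] [CharZero K] (c : K) :
    let P : Fin 3 → MvPolynomial (Fin 3) K :=
      ![X 1 * X 2, X 0 ^ 2 + C c * X 2 ^ 2, X 0 * X 1]
    let R : MvPolynomial (Fin 3) K := X 0 ^ 2 + C c * X 2 ^ 2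
    let S : MvPolynomial (Fin 3) K := C c * X 0 ^ 2 + X 2 ^ 2
    let G : (Fin 3 → K) → (Fin 3 → K) := fun v =>
      ![v 0 ^ 3 + c * (v 0 * v 2 ^ 2), c * (v 0 ^ 2 * v 1) + v 1 * v 2 ^ 2,
        v 0 ^ 2 * v 2 + c * v 2 ^ 3]
    (∀ k : ℕ,
      (∃ h : MvPolynomial (Fin 3) K, h ≠ 0 ∧ (∃ dd, h.IsHomogeneous dd) ∧
        iterComp P (2 * k) 0 = h * (R ^ k * X 0) ∧
        iterComp P (2 * k) 1 = h * (S ^ k * X 1) ∧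
        iterComp P (2 * k) 2 = h * (R ^ k * X 2)) ∧
      (∃ h' : MvPolynomial (Fin 3) K, h' ≠ 0 ∧ (∃ dd, h'.IsHomogeneous dd) ∧
        iterComp P (2 * k + 1) 0 = h' * (S ^ k * (X 1 * X 2)) ∧
        iterComp P (2 * k + 1) 1 = h' * R ^ (k + 1) ∧
        iterComp P (2 * k + 1) 2 = h' * (S ^ k * (X 0 * X 1)))) ∧
    (c ≠ 1 → c ≠ -1 →
      (∀ k : ℕ,
        (∀ q : MvPolynomial (Fin 3) K,
          q ∣ R ^ k * X 0 → q ∣ S ^ k * X 1 → q ∣ R ^ k * X 2 → IsUnit q) ∧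
        (∀ q : MvPolynomial (Fin 3) K,
          q ∣ S ^ k * (X 1 * X 2) → q ∣ R ^ (k + 1) → q ∣ S ^ k * (X 0 * X 1) →
          IsUnit q)) ∧
      (∀ n : ℕ, ∃ (h : MvPolynomial (Fin 3) K) (W : Fin 3 → MvPolynomial (Fin 3) K),
        (∀ j, iterComp P n j = h * W j) ∧
        (∀ q : MvPolynomial (Fin 3) K, (∀ j, q ∣ W j) → IsUnit q) ∧
        ∀ j, (W j).IsHomogeneous (n + 1))) ∧
    ((c = 1 ∨ c = -1) →
      ∀ k : ℕ, ∃ h : MvPolynomial (Fin 3) K, h ≠ 0 ∧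
        iterComp P (2 * k) 0 = h * X 0 ∧
        iterComp P (2 * k) 1 = C (c ^ k) * (h * X 1) ∧
        iterComp P (2 * k) 2 = h * X 2) ∧
    ((∀ t : K, t ≠ 0 → toPGL3 (Matrix.diagonal ![1, t, 1]) ∈ AutQ G) ∧
      ∃ H : Subgroup (PGL3 K), (H : Set (PGL3 K)) ⊆ AutQ G ∧ Nonempty (H ≃* Kˣ)) :=
  stmt16_general c
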